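/- arXiv:2508.18461 — 4 statements merged into one kernel-verified Lean document; each statement's English description precedes it below -/
import Mathlib

section
/- Let C be a strong divisibility sequence, let p be an acceptable prime for C with parameter s = s(p), let n ≥ 0 have standard base-p representation n = n_ℓ ⋯ n_1 n_0, and let 0 ≤ r < α(p^s). Then T_{p,C}(α(p^s)·n + r, x) equals the matrix product [u_{p,C,0}(r), u_{p,C,1}(r)] · M_p(n_0) · M_p(n_1) ⋯ M_p(n_ℓ) · [1, 0]^T, where for λ ∈ {0,1}, u_{p,C,λ}(r) = Σ x^{f_{p,C,λ}(r,r_1,r_2) − λ}, the sum over pairs (r_1, r_2) ∈ {0,1,…,α(p^s)−1}^2 with r_1 + r_2 = r + λ·α(p^s). -/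
open Finset

/-- A strong divisibility sequence: nonzero integers `Cs 1, Cs 2, ...` with
`gcd (Cs n) (Cs m) = |Cs (gcd n m)|`. -/
def IsStrongDivSeq (Cs : ℕ → ℤ) : Prop :=
  (∀ n, 1 ≤ n → Cs n ≠ 0) ∧
  ∀ m n, 1 ≤ m → 1 ≤ n → Int.gcd (Cs n) (Cs m) = (Cs (Nat.gcd n m)).natAbs

/-- `a` is the rank of apparition of `m` in the sequence `Cs`:
the least index `j ≥ 1` such that `m ∣ Cs j`. -/
def IsRank (Cs : ℕ → ℤ) (m a : ℕ) : Prop :=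
  1 ≤ a ∧ (m : ℤ) ∣ Cs a ∧ ∀ j, 1 ≤ j → (m : ℤ) ∣ Cs j → a ≤ j

/-- The `C`-orial: `0!_C = 1`, `n!_C = Cs 1 * Cs 2 * ⋯ * Cs n`. -/
def Corial (Cs : ℕ → ℤ) : ℕ → ℤ
  | 0 => 1
  | n + 1 => Corial Cs n * Cs (n + 1)

/-- `p` is an acceptable prime for `Cs`, with `α k` the rank of apparition of `p ^ k`
and parameter `s = s(p)`. -/
def AcceptablePrime (Cs : ℕ → ℤ) (p : ℕ) (α : ℕ → ℕ) (s : ℕ) : Prop :=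
  1 ≤ s ∧ (∀ k, 1 ≤ k → IsRank Cs (p ^ k) (α k)) ∧
  (∀ k, s < k → α k = p ^ (k - s) * α s)

/-- The `p`-adic valuation of the `C`-nomial coefficient `binom(n, m)_C`,
defined as `ν_p(n!_C) - ν_p(m!_C) - ν_p((n-m)!_C)` (an integer). -/
def nuCnomial (p : ℕ) (Cs : ℕ → ℤ) (n m : ℕ) : ℤ :=
  (padicValInt p (Corial Cs n) : ℤ) - (padicValInt p (Corial Cs m) : ℤ)
    - (padicValInt p (Corial Cs (n - m)) : ℤ)

/-- `T_{p,C}(n, x) = ∑_{m=0}^{n} x ^ ν_p(binom(n,m)_C)`, a polynomial in `ℤ[x]`. -/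
noncomputable def Tpoly (p : ℕ) (Cs : ℕ → ℤ) (n : ℕ) : Polynomial ℤ :=
  ∑ m ∈ Finset.range (n + 1), Polynomial.X ^ (nuCnomial p Cs n m).toNat

/-- Rowland's matrix `M_p(d)` with rows `(d+1, p-d-1)` and `(dx, (p-d)x)`. -/
noncomputable def Mmat (p d : ℕ) : Matrix (Fin 2) (Fin 2) (Polynomial ℤ) :=
  !![Polynomial.C ((d : ℤ) + 1), Polynomial.C ((p : ℤ) - d - 1);
     Polynomial.C (d : ℤ) * Polynomial.X, Polynomial.C ((p : ℤ) - d) * Polynomial.X]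

/-- `f_{p,C,λ}(r, r₁, r₂)` from the acceptable-prime initial vector. -/
def fCnom (α : ℕ → ℕ) (s lam r r1 r2 : ℕ) : ℤ :=
  (lam : ℤ) * ∑ j ∈ Finset.Icc 1 s, ((α s / α j : ℕ) : ℤ)
  + ∑ j ∈ Finset.Icc 1 s,
      (((r / α j : ℕ) : ℤ) - ((r1 / α j : ℕ) : ℤ) - ((r2 / α j : ℕ) : ℤ))

/-- `u_{p,C,λ}(r) = ∑ x ^ (f_{p,C,λ}(r,r₁,r₂) - λ)`, summed over pairs
`(r₁, r₂) ∈ {0, …, α(p^s) - 1}²` with `r₁ + r₂ = r + λ · α(p^s)`. -/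
noncomputable def uCnom (α : ℕ → ℕ) (s lam r : ℕ) : Polynomial ℤ :=
  ∑ q ∈ (Finset.range (α s) ×ˢ Finset.range (α s)).filter
      (fun q => q.1 + q.2 = r + lam * α s),
    Polynomial.X ^ (fCnom α s lam r q.1 q.2 - lam).toNat

/-!
Adding two numbers in base `q` moves a carry `c ∈ {0, 1}` from the residues to the quotients: a pair
with sum `q * N + d` is a pair of residues with sum `d + c * q` together with a pair of quotients
with sum `N - c`. For `q = α(p^s)`, Legendre's formula for `C`-orials splits the valuation of the
`C`-nomial coefficient accordingly into a part depending only on the residues, whose generating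
polynomial is `x ^ c * u_{p,C,c}(r)`, and the `p`-adic valuation of `N! / (M! * K!)` for the
quotients `M`, `K`. For `q = p` the same decomposition expresses the generating polynomials of the
latter valuations at `p * N + d` through those at `N`, and counting the residue pairs gives the
entries of `M_p(d)`.
-/

section Carry

/-- The pairs of natural numbers whose sum, together with an incoming carry `c`, is `N`. The box
only serves to make the set visibly finite. -/
def carryPairs (c N : ℕ) : Finset (ℕ × ℕ) :=
  {y ∈ range (N + 1) ×ˢ range (N + 1) | y.1 + y.2 + c = N}

/-- The pairs of base-`q` digits which, added with incoming carry `cin`, give the digit `d` and the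
outgoing carry `cout`. -/
def digitPairs (q cin cout d : ℕ) : Finset (ℕ × ℕ) :=
  {a ∈ range q ×ˢ range q | a.1 + a.2 + cin = d + cout * q}

lemma mem_carryPairs {c N : ℕ} {y : ℕ × ℕ} : y ∈ carryPairs c N ↔ y.1 + y.2 + c = N := by
  simp only [carryPairs, mem_filter, mem_product, mem_range]
  omega

lemma mem_digitPairs {q cin cout d : ℕ} {a : ℕ × ℕ} :
    a ∈ digitPairs q cin cout d ↔
      (a.1 < q ∧ a.2 < q) ∧ a.1 + a.2 + cin = d + cout * q := by
  simp only [digitPairs, mem_filter, mem_product, mem_range]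

lemma carryPairs_zero_left (N : ℕ) : carryPairs 0 N = antidiagonal N := by
  ext y
  simp [mem_carryPairs]

lemma card_digitPairs_carry_zero (q cin d : ℕ) (hd : d < q) :
    #(digitPairs q cin 0 d) = d + 1 - cin := by
  rw [← card_range (d + 1 - cin)]
  refine card_nbij' (fun a ↦ a.1) (fun a ↦ (a, d - cin - a)) ?_ ?_ ?_ ?_ <;>
    grind [Set.MapsTo, Set.LeftInvOn, mem_digitPairs]

lemma card_digitPairs_carry_one (q cin d : ℕ) (hcin : cin ≤ d + 1) :
    #(digitPairs q cin 1 d) = q - (d + 1 - cin) := by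
  rw [← Nat.card_Ico (d + 1 - cin) q]
  refine card_nbij' (fun a ↦ a.1) (fun a ↦ (a, d + q - cin - a)) ?_ ?_ ?_ ?_ <;>
    grind [Set.MapsTo, Set.LeftInvOn, mem_digitPairs]

lemma mul_add_add_mul_add_eq_iff {q N d cin a b M K : ℕ} (hd : d < q) :
    q * M + a + (q * K + b) + cin = q * N + d ↔
      M + K ≤ N ∧ a + b + cin = d + (N - M - K) * q := by
  constructor
  · intro h
    have hMK : M + K ≤ N := by
      refine Nat.lt_succ_iff.mp (lt_of_mul_lt_mul_left (a := q) ?_ q.zero_le)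
      rw [Nat.mul_succ, mul_add]
      omega
    obtain ⟨c, rfl⟩ := Nat.exists_eq_add_of_le hMK
    refine ⟨hMK, ?_⟩
    rw [Nat.sub_sub, Nat.add_sub_cancel_left]
    linarith
  · rintro ⟨hMK, h⟩
    obtain ⟨c, rfl⟩ := Nat.exists_eq_add_of_le hMK
    rw [Nat.sub_sub, Nat.add_sub_cancel_left] at h
    linarith

lemma carry_lt_two {q cin cout d a b : ℕ} (ha : a < q) (hb : b < q) (hcin : cin ≤ 1)
    (h : a + b + cin = d + cout * q) : cout < 2 := by
  refine lt_of_mul_lt_mul_right (a := q) ?_ q.zero_le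
  omega

theorem sum_carryPairs_mul_add {R : Type*} [AddCommMonoid R] {q d cin : ℕ} (N : ℕ) (hd : d < q)
    (hcin : cin ≤ 1) (F : ℕ × ℕ → R) :
    ∑ x ∈ carryPairs cin (q * N + d), F x =
      ∑ c ∈ range 2, ∑ a ∈ digitPairs q cin c d, ∑ y ∈ carryPairs c N,
        F (q * y.1 + a.1, q * y.2 + a.2) := by
  have hq : 0 < q := by omega
  simp_rw [← sum_product']
  rw [sum_sigma']
  refine sum_nbij'
    (fun x ↦ ⟨N - x.1 / q - x.2 / q, ((x.1 % q, x.2 % q), (x.1 / q, x.2 / q))⟩)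
    (fun z ↦ (q * z.2.2.1 + z.2.1.1, q * z.2.2.2 + z.2.1.2)) ?_ ?_ ?_ ?_ ?_
  · rintro ⟨m, k⟩ hx
    rw [mem_carryPairs, ← Nat.div_add_mod m q, ← Nat.div_add_mod k q,
      mul_add_add_mul_add_eq_iff hd] at hx
    obtain ⟨hle, hdigits⟩ := hx
    have hm := Nat.mod_lt m hq
    have hk := Nat.mod_lt k hq
    simp only [mem_sigma, mem_product, mem_digitPairs, mem_carryPairs, mem_range]
    exact ⟨carry_lt_two hm hk hcin hdigits, ⟨⟨hm, hk⟩, hdigits⟩, by omega⟩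
  · rintro ⟨c, ⟨a, b⟩, ⟨M, K⟩⟩ hz
    simp only [mem_sigma, mem_product, mem_digitPairs, mem_carryPairs] at hz ⊢
    obtain ⟨-, ⟨-, hdigits⟩, rfl⟩ := hz
    linarith
  · simp only [Nat.div_add_mod, implies_true]
  · rintro ⟨c, ⟨a, b⟩, ⟨M, K⟩⟩ hz
    simp only [mem_sigma, mem_product, mem_digitPairs, mem_carryPairs] at hz
    obtain ⟨-, ⟨⟨ha, hb⟩, -⟩, hN⟩ := hz
    obtain rfl : c = N - M - K := by omega
    simp only [Nat.mul_add_mod, Nat.mod_eq_of_lt ha, Nat.mod_eq_of_lt hb, Nat.mul_add_div hq,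
      Nat.div_eq_of_lt ha, Nat.div_eq_of_lt hb, add_zero]
  · simp only [Nat.div_add_mod, implies_true]

end Carry

section Factorial

open scoped Nat Polynomial
open Polynomial (X)

/-- The generating polynomial of the `p`-adic valuations of `N! / (M! * K!)` over `M + K + c = N`,
shifted by `c`. For `c = 0` it is the classical `∑ x ^ ν_p(binom(N, m))`; for `c = 1` it is the
auxiliary polynomial that makes the base-`p` recurrence close up. -/
noncomputable def carryPoly (p c N : ℕ) : ℤ[X] :=
  ∑ y ∈ carryPairs c N, X ^ (c + padicValNat p (N ! / (y.1 ! * y.2 !)))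

/-- The column vector of the two polynomials `carryPoly p c N`, `c = 0, 1`, on which the matrices
`Mmat p d` act. -/
noncomputable def carryColumn (p N : ℕ) : Matrix (Fin 2) (Fin 1) ℤ[X] :=
  Matrix.of fun c _ ↦ carryPoly p c N

variable {p : ℕ}

lemma carryColumn_zero : carryColumn p 0 = !![1; 0] := by
  have h₀ : carryPairs 0 0 = {(0, 0)} := rfl
  have h₁ : carryPairs 1 0 = ∅ := rfl
  ext c j
  fin_cases c <;> simp [carryColumn, carryPoly, h₀, h₁]

lemma Mmat_apply {d : ℕ} (hd : d < p) (cin cout : Fin 2) :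
    Mmat p d cin cout = X ^ (cin : ℕ) * (#(digitPairs p cin cout d) : ℤ[X]) := by
  fin_cases cin <;> fin_cases cout <;>
    simp [Mmat, card_digitPairs_carry_zero _ _ _ hd, card_digitPairs_carry_one,
      Nat.cast_sub hd.le, Nat.cast_sub (Nat.succ_le_of_lt hd)] <;> ring

variable [Fact p.Prime]

lemma padicValNat_factorial_eq_add {M K N : ℕ} (h : M + K ≤ N) :
    padicValNat p N ! =
      padicValNat p (N ! / (M ! * K !)) + padicValNat p M ! + padicValNat p K ! := by
  have hdvd : M ! * K ! ∣ N ! :=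
    (Nat.factorial_mul_factorial_dvd_factorial_add M K).trans (Nat.factorial_dvd_factorial h)
  have hquot : N ! / (M ! * K !) ≠ 0 := (Nat.div_pos (Nat.le_of_dvd N.factorial_pos hdvd)
    (Nat.mul_pos M.factorial_pos K.factorial_pos)).ne'
  rw [add_assoc, ← padicValNat.mul M.factorial_ne_zero K.factorial_ne_zero,
    ← padicValNat.mul hquot (mul_ne_zero M.factorial_ne_zero K.factorial_ne_zero),
    Nat.div_mul_cancel hdvd]

lemma padicValNat_factorial_div_mul_add {N M K c d a b : ℕ} (hd : d < p) (ha : a < p) (hb : b < p)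
    (hN : M + K + c = N) (hle : p * M + a + (p * K + b) ≤ p * N + d) :
    padicValNat p ((p * N + d)! / ((p * M + a)! * (p * K + b)!)) =
      c + padicValNat p (N ! / (M ! * K !)) := by
  have hval {n e : ℕ} (he : e < p) : padicValNat p (p * n + e)! = padicValNat p n ! + n := by
    rw [padicValNat_factorial_mul_add _ he, padicValNat_factorial_mul]
  have hbig := padicValNat_factorial_eq_add (p := p) hle
  have hsmall := padicValNat_factorial_eq_add (p := p) (show M + K ≤ N by omega)
  rw [hval hd, hval ha, hval hb] at hbig
  omega

lemma carryPoly_mul_add {d cin : ℕ} (N : ℕ) (hd : d < p) (hcin : cin ≤ 1) :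
    carryPoly p cin (p * N + d) =
      ∑ c ∈ range 2, X ^ cin * (#(digitPairs p cin c d) : ℤ[X]) * carryPoly p c N := by
  rw [carryPoly, sum_carryPairs_mul_add N hd hcin]
  refine sum_congr rfl fun c _ ↦ ?_
  rw [mul_comm (X ^ cin), mul_assoc, ← nsmul_eq_mul, ← sum_const]
  refine sum_congr rfl fun a ha ↦ ?_
  rw [carryPoly, mul_sum]
  refine sum_congr rfl fun y hy ↦ ?_
  obtain ⟨⟨ha₁, ha₂⟩, hdigits⟩ := mem_digitPairs.mp ha
  have hy := mem_carryPairs.mp hy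
  have hle : p * y.1 + a.1 + (p * y.2 + a.2) ≤ p * N + d := by
    rw [← hy]
    linarith
  rw [padicValNat_factorial_div_mul_add hd ha₁ ha₂ hy hle, pow_add]

lemma Mmat_mul_carryColumn {d : ℕ} (N : ℕ) (hd : d < p) :
    Mmat p d * carryColumn p N = carryColumn p (p * N + d) := by
  ext1 cin j
  simp only [Matrix.mul_apply, carryColumn, Matrix.of_apply, Mmat_apply hd]
  rw [carryPoly_mul_add N hd (by omega), ← Fin.sum_univ_eq_sum_range]

theorem prod_Mmat_mul_carryColumn_zero (L : List ℕ) (hL : ∀ d ∈ L, d < p) :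
    (L.map (Mmat p)).prod * carryColumn p 0 = carryColumn p (Nat.ofDigits p L) := by
  induction L with
  | nil => simp
  | cons d L ih =>
    obtain ⟨hd, hL⟩ := List.forall_mem_cons.mp hL
    rw [List.map_cons, List.prod_cons, Matrix.mul_assoc, ih hL, Mmat_mul_carryColumn _ hd,
      Nat.ofDigits_cons, add_comm]

end Factorial

section Rank

variable {Cs : ℕ → ℤ}

lemma IsStrongDivSeq.dvd_of_dvd (hC : IsStrongDivSeq Cs) {i j : ℕ} (hi : 1 ≤ i) (hj : 1 ≤ j)
    (h : i ∣ j) : Cs i ∣ Cs j := by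
  have hgcd := hC.2 j i hj hi
  rw [Nat.gcd_eq_left h] at hgcd
  rw [← Int.natAbs_dvd, ← hgcd]
  exact Int.gcd_dvd_right _ _

lemma IsRank.dvd_iff (hC : IsStrongDivSeq Cs) {m a j : ℕ} (h : IsRank Cs m a) (hj : 1 ≤ j) :
    (m : ℤ) ∣ Cs j ↔ a ∣ j := by
  obtain ⟨ha, hma, hmin⟩ := h
  refine ⟨fun hmj ↦ ?_, fun haj ↦ hma.trans (hC.dvd_of_dvd ha hj haj)⟩
  have hm_gcd : (m : ℤ) ∣ Cs (Nat.gcd a j) := by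
    rw [← Int.dvd_natAbs, ← hC.2 j a hj ha]
    exact Int.dvd_coe_gcd hma hmj
  have hle := hmin _ (Nat.gcd_pos_of_pos_left _ ha) hm_gcd
  exact Nat.gcd_eq_left_iff_dvd.mp (le_antisymm (Nat.gcd_le_left _ ha) hle)

lemma IsRank.dvd_of_dvd (hC : IsStrongDivSeq Cs) {m n a b : ℕ} (ha : IsRank Cs m a)
    (hb : IsRank Cs n b) (h : m ∣ n) : a ∣ b := by
  rw [← ha.dvd_iff hC hb.1]
  exact (Int.natCast_dvd_natCast.mpr h).trans hb.2.1

lemma IsStrongDivSeq.Corial_ne_zero (hC : IsStrongDivSeq Cs) (n : ℕ) : Corial Cs n ≠ 0 := by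
  induction n with
  | zero => exact one_ne_zero
  | succ n ih => exact mul_ne_zero ih (hC.1 _ n.succ_pos)

variable {p : ℕ} {α : ℕ → ℕ} [Fact p.Prime]

lemma le_padicValInt_iff_rank_dvd (hC : IsStrongDivSeq Cs) {k a j : ℕ}
    (ha : IsRank Cs (p ^ k) a) (hj : 1 ≤ j) : k ≤ padicValInt p (Cs j) ↔ a ∣ j := by
  rw [← ha.dvd_iff hC hj, Nat.cast_pow, padicValInt_dvd_iff, or_iff_right (hC.1 j hj)]

lemma padicValInt_eq_card_rank_dvd (hC : IsStrongDivSeq Cs)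
    (hα : ∀ k, 1 ≤ k → IsRank Cs (p ^ k) (α k)) {b m : ℕ} (hb : 1 ≤ b) (hm : 1 ≤ m)
    (hmb : m < α b) : padicValInt p (Cs m) = #{k ∈ Ico 1 b | α k ∣ m} := by
  have hlt : padicValInt p (Cs m) < b := by
    rw [← not_le, le_padicValInt_iff_rank_dvd hC (hα b hb) hm]
    exact Nat.not_dvd_of_pos_of_lt hm hmb
  have hset : {k ∈ Ico 1 b | α k ∣ m} = Icc 1 (padicValInt p (Cs m)) := by
    ext k
    simp only [mem_filter, mem_Ico, mem_Icc]
    refine ⟨fun ⟨⟨hk, _⟩, hdvd⟩ ↦ ⟨hk, ?_⟩, fun ⟨hk, hle⟩ ↦ ⟨⟨hk, hle.trans_lt hlt⟩, ?_⟩⟩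
    · exact (le_padicValInt_iff_rank_dvd hC (hα k hk) hm).mpr hdvd
    · exact (le_padicValInt_iff_rank_dvd hC (hα k hk) hm).mp hle
  rw [hset, Nat.card_Icc, Nat.add_sub_cancel]

theorem padicValInt_Corial_eq_sum_div_rank (hC : IsStrongDivSeq Cs)
    (hα : ∀ k, 1 ≤ k → IsRank Cs (p ^ k) (α k)) {b n : ℕ} (hb : 1 ≤ b) (hnb : n < α b) :
    padicValInt p (Corial Cs n) = ∑ k ∈ Ico 1 b, n / α k := by
  induction n with
  | zero => simp [Corial]
  | succ n ih =>
    rw [Corial, padicValInt.mul (hC.Corial_ne_zero n) (hC.1 _ n.succ_pos), ih (by omega),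
      padicValInt_eq_card_rank_dvd hC hα hb n.succ_pos hnb, card_filter, ← sum_add_distrib]
    simp_rw [Nat.succ_div]

end Rank

namespace AcceptablePrime

open scoped Nat

variable {Cs : ℕ → ℤ} {p s : ℕ} {α : ℕ → ℕ}

lemma rank_pos (hacc : AcceptablePrime Cs p α s) : 0 < α s := (hacc.2.1 s hacc.1).1

lemma rank_add (hacc : AcceptablePrime Cs p α s) (i : ℕ) : α (i + s) = α s * p ^ i := by
  rcases i.eq_zero_or_pos with rfl | hi
  · simp
  · rw [hacc.2.2 _ (by omega), Nat.add_sub_cancel, mul_comm]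

lemma rank_dvd (hC : IsStrongDivSeq Cs) (hacc : AcceptablePrime Cs p α s) {j : ℕ}
    (hj : j ∈ Icc 1 s) : α j ∣ α s := by
  obtain ⟨hj₁, hjs⟩ := mem_Icc.mp hj
  exact (hacc.2.1 j hj₁).dvd_of_dvd hC (hacc.2.1 s hacc.1) (pow_dvd_pow p hjs)

variable [hp : Fact p.Prime]

-- The ranks of `p ^ k` with `k > s` contribute Legendre's formula for `(n / α s)!`.
theorem padicValInt_Corial (hC : IsStrongDivSeq Cs) (hacc : AcceptablePrime Cs p α s) (n : ℕ) :
    padicValInt p (Corial Cs n) =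
      ∑ j ∈ Icc 1 s, n / α j + padicValNat p (n / α s)! := by
  set t := Nat.log p (n / α s) + 1
  have hnt : n < α (t + s) := by
    rw [hacc.rank_add, mul_comm, ← Nat.div_lt_iff_lt_mul hacc.rank_pos]
    exact Nat.lt_pow_succ_log_self hp.out.one_lt _
  have htail : ∑ k ∈ Ico (1 + s) (t + s), n / α k = padicValNat p (n / α s)! := by
    rw [padicValNat_factorial (Nat.lt_succ_self _), ← sum_Ico_add']
    exact sum_congr rfl fun i _ ↦ by rw [hacc.rank_add, Nat.div_div_eq_div_mul]
  rw [padicValInt_Corial_eq_sum_div_rank hC hacc.2.1 (by omega) hnt, ← htail,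
    ← sum_Ico_consecutive _ (show 1 ≤ 1 + s by omega) (by omega), add_comm 1 s,
    Ico_add_one_right_eq_Icc]

lemma padicValInt_Corial_mul_add (hC : IsStrongDivSeq Cs) (hacc : AcceptablePrime Cs p α s)
    (N : ℕ) {r : ℕ} (hr : r < α s) :
    padicValInt p (Corial Cs (α s * N + r)) =
      N * ∑ j ∈ Icc 1 s, α s / α j + ∑ j ∈ Icc 1 s, r / α j + padicValNat p N ! := by
  rw [hacc.padicValInt_Corial hC, Nat.mul_add_div hacc.rank_pos, Nat.div_eq_of_lt hr, add_zero,
    mul_sum, ← sum_add_distrib]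
  congr 1
  refine sum_congr rfl fun j hj ↦ ?_
  have hdvd := hacc.rank_dvd hC hj
  rw [Nat.add_div_of_dvd_right (hdvd.mul_right N), mul_comm, Nat.mul_div_assoc N hdvd]

theorem nuCnomial_mul_add (hC : IsStrongDivSeq Cs) (hacc : AcceptablePrime Cs p α s)
    {N M K c r r₁ r₂ : ℕ} (hr : r < α s) (hr₁ : r₁ < α s) (hr₂ : r₂ < α s)
    (hN : M + K + c = N) (hsum : r₁ + r₂ = r + c * α s) :
    nuCnomial p Cs (α s * N + r) (α s * M + r₁) =
      fCnom α s c r r₁ r₂ + padicValNat p (N ! / (M ! * K !)) := by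
  have hsub : α s * N + r - (α s * M + r₁) = α s * K + r₂ := by
    refine Nat.sub_eq_of_eq_add ?_
    rw [← hN]
    linarith
  rw [nuCnomial, hsub, hacc.padicValInt_Corial_mul_add hC N hr,
    hacc.padicValInt_Corial_mul_add hC M hr₁, hacc.padicValInt_Corial_mul_add hC K hr₂,
    padicValNat_factorial_eq_add (show M + K ≤ N by omega), ← hN, fCnom, sum_sub_distrib,
    sum_sub_distrib]
  push_cast
  ring

end AcceptablePrime

lemma Tpoly_eq_sum_carryPairs (p : ℕ) (Cs : ℕ → ℤ) (n : ℕ) :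
    Tpoly p Cs n = ∑ x ∈ carryPairs 0 n, Polynomial.X ^ (nuCnomial p Cs n x.1).toNat := by
  rw [carryPairs_zero_left, Finset.Nat.sum_antidiagonal_eq_sum_range_succ_mk, Tpoly]

-- The summand of `fCnom` at `j = s` is the carry itself, and the others are nonnegative.
lemma carry_le_fCnom {α : ℕ → ℕ} {s c r r₁ r₂ : ℕ} (hs : 1 ≤ s)
    (hdvd : ∀ j ∈ Icc 1 s, α j ∣ α s) (hr : r < α s) (hr₁ : r₁ < α s) (hr₂ : r₂ < α s)
    (hsum : r₁ + r₂ = r + c * α s) : (c : ℤ) ≤ fCnom α s c r r₁ r₂ := by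
  have hterm (j : ℕ) (hj : j ∈ Icc 1 s) :
      0 ≤ (c : ℤ) * (α s / α j : ℕ) + ((r / α j : ℕ) - (r₁ / α j : ℕ) - (r₂ / α j : ℕ)) := by
    have hle : r₁ / α j + r₂ / α j ≤ (r₁ + r₂) / α j := Nat.div_add_div_le_add_div
    rw [hsum, Nat.add_div_of_dvd_left ((hdvd j hj).mul_left c),
      Nat.mul_div_assoc c (hdvd j hj)] at hle
    zify at hle ⊢
    linarith
  rw [fCnom, mul_sum, ← sum_add_distrib]
  refine le_of_eq_of_le ?_ (single_le_sum hterm (mem_Icc.mpr ⟨hs, le_rfl⟩))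
  simp [Nat.div_self (r.zero_le.trans_lt hr), Nat.div_eq_of_lt hr, Nat.div_eq_of_lt hr₁,
    Nat.div_eq_of_lt hr₂]

theorem AcceptablePrime.Tpoly_mul_add {Cs : ℕ → ℤ} {p s : ℕ} {α : ℕ → ℕ} [Fact p.Prime]
    (hC : IsStrongDivSeq Cs) (hacc : AcceptablePrime Cs p α s) (N : ℕ) {r : ℕ} (hr : r < α s) :
    Tpoly p Cs (α s * N + r) = ∑ c ∈ range 2, uCnom α s c r * carryPoly p c N := by
  rw [Tpoly_eq_sum_carryPairs, sum_carryPairs_mul_add N hr zero_le_one]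
  refine sum_congr rfl fun c _ ↦ ?_
  have hu : uCnom α s c r = ∑ a ∈ digitPairs (α s) 0 c r,
      Polynomial.X ^ (fCnom α s c r a.1 a.2 - c).toNat := rfl
  rw [hu, carryPoly, sum_mul_sum]
  refine sum_congr rfl fun a ha ↦ sum_congr rfl fun y hy ↦ ?_
  obtain ⟨⟨ha₁, ha₂⟩, hsum⟩ := mem_digitPairs.mp ha
  have hle := carry_le_fCnom hacc.1 (fun _ ↦ hacc.rank_dvd hC) hr ha₁ ha₂ hsum
  rw [hacc.nuCnomial_mul_add hC hr ha₁ ha₂ (mem_carryPairs.mp hy) hsum, ← pow_add]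
  congr 1
  omega

theorem stmt1 (Cs : ℕ → ℤ) (p : ℕ) (hp : p.Prime) (α : ℕ → ℕ) (s : ℕ)
    (hC : IsStrongDivSeq Cs) (hacc : AcceptablePrime Cs p α s)
    (n r : ℕ) (hr : r < α s) :
    Tpoly p Cs (α s * n + r) =
      (!![uCnom α s 0 r, uCnom α s 1 r] *
        ((Nat.digits p n).map (Mmat p)).prod * (!![1; 0] : Matrix (Fin 2) (Fin 1) (Polynomial ℤ))) 0 0 := by
  have : Fact p.Prime := ⟨hp⟩
  have hdigits : ∀ d ∈ Nat.digits p n, d < p := fun _ ↦ Nat.digits_lt_base hp.one_lt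
  rw [Matrix.mul_assoc, ← carryColumn_zero (p := p), prod_Mmat_mul_carryColumn_zero _ hdigits,
    Nat.ofDigits_digits, hacc.Tpoly_mul_add hC n hr]
  simp [Matrix.mul_apply, carryColumn, sum_range_succ]
end

section
/- Let C be a strong divisibility sequence and let p be an ideal prime for C with parameter s = s(p). Then for every integer n ≥ 0, ν_p(n!_C) = s·⌊n/α(p)⌋ + ν_p(⌊n/α(p)⌋!). -/
open Finset

/-- `p` is an ideal prime for `Cs`, with `α k` the rank of apparition of `p ^ k`
and parameter `s = s(p)`. -/
def IdealPrime (Cs : ℕ → ℤ) (p : ℕ) (α : ℕ → ℕ) (s : ℕ) : Prop :=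
  1 ≤ s ∧ (∀ k, 1 ≤ k → IsRank Cs (p ^ k) (α k)) ∧
  (∀ k, 1 ≤ k → k ≤ s → α k = α 1) ∧
  (∀ k, s < k → α k = p ^ (k - s) * α 1)

/-! Strong divisibility turns the rank into a divisibility criterion, `m ∣ Cs n ↔ α(m) ∣ n`. At an
ideal prime this makes `Cs n` a unit at `p` unless `α(p) ∣ n`, and gives
`ν_p (Cs (α(p) * m)) = s + ν_p m`. In the `C`-orial only the `⌊n / α(p)⌋` multiples of `α(p)`
contribute, and their terms `ν_p m` add up to the valuation of a factorial. -/

namespace IsStrongDivSeq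

variable {Cs : ℕ → ℤ}

theorem apply_dvd_apply (hC : IsStrongDivSeq Cs) {a n : ℕ} (hn : 1 ≤ n) (han : a ∣ n) :
    Cs a ∣ Cs n := by
  have hgcd : Int.gcd (Cs n) (Cs a) = (Cs a).natAbs := by
    rw [hC.2 a n (Nat.pos_of_dvd_of_pos han hn) hn, Nat.gcd_eq_right han]
  rw [← Int.natAbs_dvd, ← hgcd]
  exact Int.gcd_dvd_left _ _

theorem dvd_apply_gcd (hC : IsStrongDivSeq Cs) {d : ℤ} {a n : ℕ} (ha : 1 ≤ a) (hn : 1 ≤ n)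
    (hda : d ∣ Cs a) (hdn : d ∣ Cs n) : d ∣ Cs (n.gcd a) := by
  rw [← Int.dvd_natAbs, ← hC.2 a n ha hn]
  exact Int.dvd_coe_gcd hdn hda

theorem dvd_apply_iff (hC : IsStrongDivSeq Cs) {m a n : ℕ} (hrank : IsRank Cs m a)
    (hn : 1 ≤ n) : (m : ℤ) ∣ Cs n ↔ a ∣ n := by
  obtain ⟨ha, hma, hmin⟩ := hrank
  refine ⟨fun hmn ↦ ?_, fun han ↦ hma.trans (hC.apply_dvd_apply hn han)⟩
  have hle : a ≤ n.gcd a :=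
    hmin _ (Nat.gcd_pos_of_pos_left _ hn) (hC.dvd_apply_gcd ha hn hma hmn)
  exact Nat.gcd_eq_right_iff_dvd.mp (le_antisymm (Nat.gcd_le_right _ ha) hle)

end IsStrongDivSeq

namespace IdealPrime

variable {Cs : ℕ → ℤ} {p : ℕ} {α : ℕ → ℕ} {s : ℕ}

theorem rank_pos (hid : IdealPrime Cs p α s) : 1 ≤ α 1 :=
  (hid.2.1 1 le_rfl).1

-- Truncated subtraction merges the two cases: `p ^ (k - s) = 1` when `k ≤ s`.
theorem rank_pow (hid : IdealPrime Cs p α s) {k : ℕ} (hk : 1 ≤ k) :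
    α k = p ^ (k - s) * α 1 := by
  obtain ⟨-, -, hsmall, hlarge⟩ := hid
  rcases le_or_gt k s with hks | hsk
  · rw [hsmall k hk hks, Nat.sub_eq_zero_of_le hks, pow_zero, one_mul]
  · exact hlarge k hsk

theorem pow_dvd_apply_rank_mul_iff (hid : IdealPrime Cs p α s) (hC : IsStrongDivSeq Cs)
    {m : ℕ} (hm : 1 ≤ m) (k : ℕ) :
    (p : ℤ) ^ k ∣ Cs (α 1 * m) ↔ p ^ (k - s) ∣ m := by
  rcases Nat.eq_zero_or_pos k with rfl | hk
  · simp
  · rw [← Nat.cast_pow, hC.dvd_apply_iff (hid.2.1 k hk) (Nat.mul_pos hid.rank_pos hm),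
      hid.rank_pow hk, mul_comm (α 1) m, Nat.mul_dvd_mul_iff_right hid.rank_pos]

theorem padicValInt_apply_of_not_rank_dvd (hid : IdealPrime Cs p α s) (hC : IsStrongDivSeq Cs)
    {n : ℕ} (hn : 1 ≤ n) (hrank : ¬ α 1 ∣ n) : padicValInt p (Cs n) = 0 := by
  rw [← hC.dvd_apply_iff (hid.2.1 1 le_rfl) hn, pow_one] at hrank
  exact padicValInt.eq_zero_of_not_dvd hrank

theorem padicValInt_apply_rank_mul [Fact p.Prime] (hid : IdealPrime Cs p α s)
    (hC : IsStrongDivSeq Cs) {m : ℕ} (hm : 1 ≤ m) :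
    padicValInt p (Cs (α 1 * m)) = s + padicValNat p m := by
  refine eq_of_forall_le_iff fun k ↦ ?_
  have hCs : Cs (α 1 * m) ≠ 0 := hC.1 _ (Nat.mul_pos hid.rank_pos hm)
  calc k ≤ padicValInt p (Cs (α 1 * m))
      ↔ (p : ℤ) ^ k ∣ Cs (α 1 * m) := by rw [padicValInt_dvd_iff, or_iff_right hCs]
    _ ↔ p ^ (k - s) ∣ m := hid.pow_dvd_apply_rank_mul_iff hC hm k
    _ ↔ k - s ≤ padicValNat p m := padicValNat_dvd_iff_le (Nat.ne_of_gt hm)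
    _ ↔ k ≤ s + padicValNat p m := Nat.sub_le_iff_le_add'

end IdealPrime

theorem corial_ne_zero {Cs : ℕ → ℤ} (hCs : ∀ n, 1 ≤ n → Cs n ≠ 0) (n : ℕ) :
    Corial Cs n ≠ 0 := by
  induction n with
  | zero => exact one_ne_zero
  | succ n ih => exact mul_ne_zero ih (hCs _ n.succ_pos)

theorem padicValInt_corial_succ {Cs : ℕ → ℤ} {p : ℕ} [Fact p.Prime]
    (hCs : ∀ n, 1 ≤ n → Cs n ≠ 0) (n : ℕ) :
    padicValInt p (Corial Cs (n + 1)) =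
      padicValInt p (Corial Cs n) + padicValInt p (Cs (n + 1)) :=
  padicValInt.mul (corial_ne_zero hCs n) (hCs _ n.succ_pos)

theorem padicValNat_factorial_succ (p : ℕ) [Fact p.Prime] (n : ℕ) :
    padicValNat p (n + 1).factorial = padicValNat p (n + 1) + padicValNat p n.factorial := by
  rw [Nat.factorial_succ, padicValNat.mul n.succ_ne_zero n.factorial_ne_zero]

theorem stmt6 (Cs : ℕ → ℤ) (p : ℕ) (hp : p.Prime) (α : ℕ → ℕ) (s : ℕ)
    (hC : IsStrongDivSeq Cs) (hid : IdealPrime Cs p α s) (n : ℕ) :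
    padicValInt p (Corial Cs n) =
      s * (n / α 1) + padicValNat p (Nat.factorial (n / α 1)) := by
  have : Fact p.Prime := ⟨hp⟩
  induction n with
  | zero => simp [Corial]
  | succ n ih =>
    rw [padicValInt_corial_succ hC.1, ih]
    by_cases hdvd : α 1 ∣ n + 1
    · have hquot : (n + 1) / α 1 = n / α 1 + 1 := Nat.succ_div_of_dvd hdvd
      have hterm : padicValInt p (Cs (n + 1)) = s + padicValNat p (n / α 1 + 1) := by
        rw [← hid.padicValInt_apply_rank_mul hC (Nat.le_add_left 1 _), ← hquot,
          Nat.mul_div_cancel' hdvd]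
      rw [hterm, hquot, padicValNat_factorial_succ]
      ring
    · rw [hid.padicValInt_apply_of_not_rank_dvd hC n.succ_pos hdvd,
        Nat.succ_div_of_not_dvd hdvd, add_zero]
end

section
/- Let C be a strong divisibility sequence and let p be an ideal prime for C with parameter s = s(p). For any integer n ≥ 0, write n = α(p)·n' + r with n' ≥ 0 and 0 ≤ r < α(p). Then Σ_{m=0}^{n} x^{ν_p(binom(n,m)_C)} = (r+1)·Σ_{m'=0}^{n'} x^{ν_p(binom(n',m'))} + (α(p) − r − 1)·x^{s−1}·Σ_{m'=0}^{n'−1} x^{1 + ν_p(n'·binom(n'−1,m'))}, as an identity of polynomials in ℤ[x] (where binom denotes the ordinary binomial coefficient in the right-hand sums, and the last sum is empty when n' = 0). -/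
open Finset

/-!
By strong divisibility, `p ^ k ∣ C_j` exactly when `α(p ^ k) ∣ j`. For an ideal prime this makes
`ν_p(C_j)` vanish off the multiples of `a = α(p)` and gives `ν_p(C_{ai}) = s + ν_p(i)`, hence
`ν_p(n!_C) = s ⌊n/a⌋ + ν_p(⌊n/a⌋!)`. Write `n = a n' + r` and `m = a m' + t` with `r, t < a`.
If `t ≤ r`, subtracting `m` from `n` needs no borrow from the quotient and
`ν_p(binom(n, m)_C) = ν_p(binom(n', m'))`. If `r < t`, the quotient of `n - m` drops by one and the
valuation becomes `s + ν_p(n' binom(n' - 1, m'))`. Each `m'` is met by `r + 1` values of `t` in the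
first case and by `a - r - 1` in the second.
-/

section Blocks

variable {M : Type*} [AddCommMonoid M] (f : ℕ → M)

lemma sum_range_mul_eq_sum_sum (a N : ℕ) :
    ∑ m ∈ range (a * N), f m = ∑ k ∈ range N, ∑ t ∈ range a, f (a * k + t) := by
  induction N with
  | zero => simp
  | succ N ih => rw [Nat.mul_succ, sum_range_add, ih, sum_range_succ]

lemma sum_range_mul_add_eq_sum_sum {a b : ℕ} (hb : b ≤ a) (N : ℕ) :
    ∑ m ∈ range (a * N + b), f m =
      ∑ k ∈ range (N + 1), ∑ t ∈ range b, f (a * k + t) +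
        ∑ k ∈ range N, ∑ t ∈ Ico b a, f (a * k + t) := by
  calc ∑ m ∈ range (a * N + b), f m
      = ∑ k ∈ range N, ∑ t ∈ range a, f (a * k + t) + ∑ t ∈ range b, f (a * N + t) := by
        rw [sum_range_add, sum_range_mul_eq_sum_sum]
    _ = ∑ k ∈ range N, (∑ t ∈ range b, f (a * k + t) + ∑ t ∈ Ico b a, f (a * k + t)) +
          ∑ t ∈ range b, f (a * N + t) := by
        simp only [sum_range_add_sum_Ico _ hb]
    _ = _ := by
        rw [sum_add_distrib, sum_range_succ _ N, add_right_comm]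

variable {f}

lemma sum_range_mul_add_of_eq_on_blocks {A B : ℕ → M} {a b N : ℕ} (hb : b ≤ a)
    (hA : ∀ k ≤ N, ∀ t < b, f (a * k + t) = A k)
    (hB : ∀ k < N, ∀ t, b ≤ t → t < a → f (a * k + t) = B k) :
    ∑ m ∈ range (a * N + b), f m =
      b • ∑ k ∈ range (N + 1), A k + (a - b) • ∑ k ∈ range N, B k := by
  rw [sum_range_mul_add_eq_sum_sum f hb, smul_sum, smul_sum]
  congr 1 <;> refine sum_congr rfl fun k hk ↦ ?_
  · rw [sum_eq_card_nsmul fun t ht ↦ hA k (mem_range_succ_iff.1 hk) t (mem_range.1 ht),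
      card_range]
  · rw [sum_eq_card_nsmul fun t ht ↦ hB k (mem_range.1 hk) t (mem_Ico.1 ht).1 (mem_Ico.1 ht).2,
      Nat.card_Ico]

end Blocks

section Factorial

open Nat

variable {p : ℕ} [Fact p.Prime]

lemma padicValNat_factorial_eq_choose_add {n k : ℕ} (hk : k ≤ n) :
    padicValNat p n ! =
      padicValNat p (n.choose k) + padicValNat p k ! + padicValNat p (n - k)! := by
  have hchoose : n.choose k ≠ 0 := (choose_pos hk).ne'
  rw [← choose_mul_factorial_mul_factorial hk,
    padicValNat.mul (mul_ne_zero hchoose k.factorial_ne_zero) (n - k).factorial_ne_zero,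
    padicValNat.mul hchoose k.factorial_ne_zero]

lemma padicValNat_factorial_eq_mul_choose_add {n k : ℕ} (hk : k < n) :
    padicValNat p n ! =
      padicValNat p (n * (n - 1).choose k) + padicValNat p k ! + padicValNat p (n - 1 - k)! := by
  have hk' : k ≤ n - 1 := Nat.le_sub_one_of_lt hk
  have hn : n ≠ 0 := Nat.ne_zero_of_lt hk
  rw [← mul_factorial_pred hn, padicValNat.mul hn (factorial_ne_zero _),
    padicValNat_factorial_eq_choose_add hk', padicValNat.mul hn (choose_pos hk').ne']
  ring

end Factorial

namespace IsStrongDivSeq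

variable {Cs : ℕ → ℤ}

lemma dvd_of_dvd_s10 (hC : IsStrongDivSeq Cs) {i j : ℕ} (hj : 1 ≤ j) (hij : i ∣ j) :
    Cs i ∣ Cs j := by
  have hgcd : Int.gcd (Cs j) (Cs i) = (Cs i).natAbs := by
    rw [hC.2 i j (Nat.pos_of_dvd_of_pos hij hj) hj, Nat.gcd_eq_right hij]
  rw [← Int.natAbs_dvd, ← hgcd]
  exact Int.gcd_dvd_left _ _

lemma natCast_dvd_iff_rank_dvd (hC : IsStrongDivSeq Cs) {q a j : ℕ} (ha : IsRank Cs q a)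
    (hj : 1 ≤ j) : (q : ℤ) ∣ Cs j ↔ a ∣ j := by
  obtain ⟨ha_pos, hq_dvd, ha_min⟩ := ha
  refine ⟨fun hq ↦ ?_, fun haj ↦ hq_dvd.trans (hC.dvd_of_dvd_s10 hj haj)⟩
  have hq_dvd_gcd : (q : ℤ) ∣ Cs (j.gcd a) := by
    rw [← Int.dvd_natAbs, ← hC.2 a j ha_pos hj]
    exact Int.dvd_coe_gcd hq hq_dvd
  have ha_le : a ≤ j.gcd a := ha_min _ (Nat.gcd_pos_of_pos_left _ hj) hq_dvd_gcd
  exact Nat.gcd_eq_right_iff_dvd.1 ((Nat.gcd_le_right _ ha_pos).antisymm ha_le)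

lemma corial_ne_zero (hC : IsStrongDivSeq Cs) (n : ℕ) : Corial Cs n ≠ 0 := by
  induction n with
  | zero => exact one_ne_zero
  | succ n ih => exact mul_ne_zero ih (hC.1 _ n.succ_pos)

end IsStrongDivSeq

namespace IdealPrime

variable {Cs : ℕ → ℤ} {p : ℕ} {α : ℕ → ℕ} {s : ℕ}

lemma rank_one_pos (hid : IdealPrime Cs p α s) : 0 < α 1 := (hid.2.1 1 le_rfl).1

lemma rank_add (hid : IdealPrime Cs p α s) (v : ℕ) : α (s + v) = p ^ v * α 1 := by
  obtain ⟨hs, -, hα_le, hα_gt⟩ := hid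
  rcases v.eq_zero_or_pos with rfl | hv
  · simpa using hα_le s hs le_rfl
  · rw [hα_gt (s + v) (Nat.lt_add_of_pos_right hv), Nat.add_sub_cancel_left]

lemma padicValInt_eq_zero_of_not_rank_dvd (hid : IdealPrime Cs p α s) (hC : IsStrongDivSeq Cs)
    {j : ℕ} (hj : 1 ≤ j) (hdvd : ¬ α 1 ∣ j) : padicValInt p (Cs j) = 0 := by
  refine padicValInt.eq_zero_of_not_dvd fun hp ↦ hdvd ?_
  exact (hC.natCast_dvd_iff_rank_dvd (hid.2.1 1 le_rfl) hj).1 (by rwa [pow_one])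

lemma pow_add_dvd_iff_pow_dvd (hid : IdealPrime Cs p α s) (hC : IsStrongDivSeq Cs)
    {i : ℕ} (hi : 1 ≤ i) (v : ℕ) :
    (p : ℤ) ^ (s + v) ∣ Cs (α 1 * i) ↔ p ^ v ∣ i := by
  have hα := hid.rank_one_pos
  rw [← Nat.cast_pow, hC.natCast_dvd_iff_rank_dvd (hid.2.1 (s + v) (hid.1.trans (s.le_add_right v)))
    (Nat.mul_pos hα hi), hid.rank_add, mul_comm, Nat.mul_dvd_mul_iff_left hα]

variable [Fact p.Prime]

lemma padicValInt_rank_mul (hid : IdealPrime Cs p α s) (hC : IsStrongDivSeq Cs)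
    {i : ℕ} (hi : 1 ≤ i) : padicValInt p (Cs (α 1 * i)) = s + padicValNat p i := by
  have hCs : Cs (α 1 * i) ≠ 0 := hC.1 _ (Nat.mul_pos hid.rank_one_pos hi)
  have le_iff (v : ℕ) : s + v ≤ padicValInt p (Cs (α 1 * i)) ↔ v ≤ padicValNat p i := by
    rw [← padicValNat_dvd_iff_le (Nat.ne_zero_of_lt hi), ← hid.pow_add_dvd_iff_pow_dvd hC hi,
      padicValInt_dvd_iff, or_iff_right hCs]
  obtain ⟨d, hd⟩ := Nat.exists_eq_add_of_le ((le_iff 0).2 (Nat.zero_le _))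
  have d_eq : d = padicValNat p i := eq_of_forall_le_iff fun v ↦ by
    rw [← le_iff v, hd, add_zero, Nat.add_le_add_iff_left]
  rw [hd, d_eq, add_zero]

open Nat in
lemma padicValInt_corial (hid : IdealPrime Cs p α s) (hC : IsStrongDivSeq Cs) (n : ℕ) :
    padicValInt p (Corial Cs n) = s * (n / α 1) + padicValNat p (n / α 1)! := by
  induction n with
  | zero => simp [Corial]
  | succ n ih =>
    rw [Corial, padicValInt.mul (hC.corial_ne_zero n) (hC.1 _ n.succ_pos), ih]
    by_cases hdvd : α 1 ∣ n + 1
    · have hindex : n + 1 = α 1 * (n / α 1 + 1) := by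
        rw [← succ_div_of_dvd hdvd, Nat.mul_div_cancel' hdvd]
      have hval : padicValInt p (Cs (n + 1)) = s + padicValNat p (n / α 1 + 1) := by
        rw [hindex, hid.padicValInt_rank_mul hC (Nat.succ_pos _)]
      rw [hval, succ_div_of_dvd hdvd, factorial_succ,
        padicValNat.mul (Nat.succ_ne_zero _) (factorial_ne_zero _)]
      ring
    · rw [hid.padicValInt_eq_zero_of_not_rank_dvd hC n.succ_pos hdvd,
        succ_div_of_not_dvd hdvd, add_zero]

open Nat in
lemma padicValInt_corial_mul_add (hid : IdealPrime Cs p α s) (hC : IsStrongDivSeq Cs)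
    {q t : ℕ} (ht : t < α 1) :
    padicValInt p (Corial Cs (α 1 * q + t)) = s * q + padicValNat p q ! := by
  rw [hid.padicValInt_corial hC, mul_add_div hid.rank_one_pos, Nat.div_eq_of_lt ht, add_zero]

variable {n' r k t : ℕ}

lemma nuCnomial_mul_add_of_le (hid : IdealPrime Cs p α s) (hC : IsStrongDivSeq Cs)
    (hk : k ≤ n') (htr : t ≤ r) (hr : r < α 1) :
    nuCnomial p Cs (α 1 * n' + r) (α 1 * k + t) = padicValNat p (n'.choose k) := by
  have hsub : α 1 * n' + r - (α 1 * k + t) = α 1 * (n' - k) + (r - t) := by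
    have := Nat.mul_le_mul_left (α 1) hk
    rw [Nat.mul_sub]
    lia
  rw [nuCnomial, hsub, hid.padicValInt_corial_mul_add hC hr,
    hid.padicValInt_corial_mul_add hC (htr.trans_lt hr),
    hid.padicValInt_corial_mul_add hC ((r.sub_le t).trans_lt hr),
    padicValNat_factorial_eq_choose_add hk]
  push_cast [hk]
  ring

lemma nuCnomial_mul_add_of_lt (hid : IdealPrime Cs p α s) (hC : IsStrongDivSeq Cs)
    (hk : k < n') (hrt : r < t) (ht : t < α 1) :
    nuCnomial p Cs (α 1 * n' + r) (α 1 * k + t) =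
      s + padicValNat p (n' * (n' - 1).choose k) := by
  obtain ⟨j, rfl⟩ := Nat.exists_eq_add_of_lt hk
  have hquot : k + j + 1 - 1 - k = j := by lia
  have hsub : α 1 * (k + j + 1) + r - (α 1 * k + t) = α 1 * j + (α 1 + r - t) := by
    rw [mul_add, mul_add]
    lia
  rw [nuCnomial, hsub, hid.padicValInt_corial_mul_add hC (hrt.trans ht),
    hid.padicValInt_corial_mul_add hC ht,
    hid.padicValInt_corial_mul_add hC (by lia : α 1 + r - t < α 1),
    padicValNat_factorial_eq_mul_choose_add hk, hquot]
  push_cast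
  ring

end IdealPrime

theorem stmt10 (Cs : ℕ → ℤ) (p : ℕ) (hp : p.Prime) (α : ℕ → ℕ) (s : ℕ)
    (hC : IsStrongDivSeq Cs) (hid : IdealPrime Cs p α s)
    (n' r : ℕ) (hr : r < α 1) :
    ∑ m ∈ Finset.range (α 1 * n' + r + 1),
        Polynomial.X ^ (nuCnomial p Cs (α 1 * n' + r) m).toNat =
      Polynomial.C ((r : ℤ) + 1) *
        (∑ m' ∈ Finset.range (n' + 1),
          Polynomial.X ^ padicValNat p (Nat.choose n' m')) +
      Polynomial.C ((α 1 : ℤ) - r - 1) * Polynomial.X ^ (s - 1) *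
        (∑ m' ∈ Finset.range n',
          Polynomial.X ^ (1 + padicValNat p (n' * Nat.choose (n' - 1) m'))) := by
  have := Fact.mk hp
  have no_borrow : ∀ k ≤ n', ∀ t < r + 1,
      (Polynomial.X : Polynomial ℤ) ^ (nuCnomial p Cs (α 1 * n' + r) (α 1 * k + t)).toNat =
        Polynomial.X ^ padicValNat p (n'.choose k) := fun k hk t ht ↦ by
    rw [hid.nuCnomial_mul_add_of_le hC hk (Nat.le_of_lt_succ ht) hr, Int.toNat_natCast]
  have borrow : ∀ k < n', ∀ t, r + 1 ≤ t → t < α 1 →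
      (Polynomial.X : Polynomial ℤ) ^ (nuCnomial p Cs (α 1 * n' + r) (α 1 * k + t)).toNat =
        Polynomial.X ^ (s - 1) *
          Polynomial.X ^ (1 + padicValNat p (n' * (n' - 1).choose k)) := fun k hk t hrt ht ↦ by
    rw [hid.nuCnomial_mul_add_of_lt hC hk hrt ht, ← Nat.cast_add, Int.toNat_natCast, ← pow_add,
      ← add_assoc, Nat.sub_add_cancel hid.1]
  rw [add_assoc, sum_range_mul_add_of_eq_on_blocks hr no_borrow borrow, ← mul_sum, nsmul_eq_mul,
    nsmul_eq_mul, Nat.cast_sub hr]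
  simp only [map_sub, map_add, map_one, map_natCast, Nat.cast_succ, sub_sub, mul_assoc]
end

section
/- Let C be a strong divisibility sequence and let p be an acceptable prime for C with parameter s = s(p). Then for every integer n ≥ 0, ν_p(n!_C) = Σ_{k=1}^{s} ⌊n / α(p^k)⌋ + ν_p(⌊n / α(p^s)⌋!). -/
open Finset

/-!
In a strong divisibility sequence `p ^ k ∣ C_i` holds exactly when `α(p ^ k) ∣ i`, so counting the
pairs `(i, k)` with `i ≤ n` and `p ^ k ∣ C_i` in two ways gives Legendre's formula
`ν_p(n!_C) = ∑_{k ≥ 1} ⌊n / α(p ^ k)⌋`. For `k = s + j` acceptability turns the `k`-th term into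
`⌊⌊n / α(p ^ s)⌋ / p ^ j⌋`, so the terms with `k > s` form the classical Legendre sum of
`⌊n / α(p ^ s)⌋!`.
-/

section PadicVal

variable {p : ℕ}

lemma padicValInt_prod [Fact p.Prime] {ι : Type*} {t : Finset ι} {f : ι → ℤ}
    (hf : ∀ i ∈ t, f i ≠ 0) : padicValInt p (∏ i ∈ t, f i) = ∑ i ∈ t, padicValInt p (f i) := by
  induction t using Finset.cons_induction with
  | empty => simp
  | cons a t ha ih =>
    obtain ⟨hfa, hft⟩ := forall_mem_cons ha _ |>.mp hf
    rw [prod_cons, sum_cons, padicValInt.mul hfa (prod_ne_zero_iff.mpr hft), ih hft]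

lemma padicValInt_eq_card_pow_dvd (hp : p ≠ 1) {z : ℤ} (hz : z ≠ 0) {b : ℕ}
    (hb : padicValInt p z < b) : padicValInt p z = #{k ∈ Ico 1 b | ((p ^ k : ℕ) : ℤ) ∣ z} := by
  have dvd_iff (k : ℕ) : ((p ^ k : ℕ) : ℤ) ∣ z ↔ k ≤ padicValInt p z := by
    rw [Nat.cast_pow, padicValInt_dvd_iff_of_ne_one hp, or_iff_right hz]
  have filter_eq : {k ∈ Ico 1 b | ((p ^ k : ℕ) : ℤ) ∣ z} = Icc 1 (padicValInt p z) := by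
    ext k
    simp only [mem_filter, mem_Ico, mem_Icc, dvd_iff]
    omega
  rw [filter_eq, Nat.card_Icc, Nat.add_sub_cancel]

end PadicVal

lemma corial_eq_prod_Ioc (Cs : ℕ → ℤ) (n : ℕ) : Corial Cs n = ∏ i ∈ Ioc 0 n, Cs i := by
  induction n with
  | zero => rfl
  | succ n ih => rw [Corial, prod_Ioc_succ_top n.zero_le, ih]

lemma padicValInt_corial_eq_sum_padicValInt {p : ℕ} [Fact p.Prime] {Cs : ℕ → ℤ}
    (hCs : ∀ n, 1 ≤ n → Cs n ≠ 0) (n : ℕ) :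
    padicValInt p (Corial Cs n) = ∑ i ∈ Ioc 0 n, padicValInt p (Cs i) := by
  rw [corial_eq_prod_Ioc, padicValInt_prod fun i hi ↦ hCs i (mem_Ioc.mp hi).1]

section StrongDivSeq

variable {Cs : ℕ → ℤ}

lemma IsStrongDivSeq.dvd_of_dvd_s13 (hC : IsStrongDivSeq Cs) {m n : ℕ} (hm : 1 ≤ m) (hn : 1 ≤ n)
    (hmn : m ∣ n) : Cs m ∣ Cs n := by
  have gcd_eq : Int.gcd (Cs n) (Cs m) = (Cs m).natAbs := by
    rw [hC.2 m n hm hn, Nat.gcd_eq_right hmn]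
  rw [← Int.natAbs_dvd, ← gcd_eq]
  exact Int.gcd_dvd_left _ _

lemma IsStrongDivSeq.dvd_apply_gcd_s13 (hC : IsStrongDivSeq Cs) {d : ℤ} {m n : ℕ} (hm : 1 ≤ m)
    (hn : 1 ≤ n) (hdm : d ∣ Cs m) (hdn : d ∣ Cs n) : d ∣ Cs (Nat.gcd n m) := by
  rw [← Int.dvd_natAbs, ← hC.2 m n hm hn]
  exact Int.dvd_coe_gcd hdn hdm

lemma IsStrongDivSeq.dvd_iff_rank_dvd (hC : IsStrongDivSeq Cs) {m a n : ℕ} (ha : IsRank Cs m a)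
    (hn : 1 ≤ n) : (m : ℤ) ∣ Cs n ↔ a ∣ n := by
  obtain ⟨a_pos, dvd_apply, le_of_dvd_apply⟩ := ha
  refine ⟨fun h ↦ ?_, fun h ↦ dvd_apply.trans (hC.dvd_of_dvd_s13 a_pos hn h)⟩
  have le_gcd : a ≤ Nat.gcd n a :=
    le_of_dvd_apply _ (Nat.gcd_pos_of_pos_left a hn) (hC.dvd_apply_gcd_s13 a_pos hn dvd_apply h)
  exact Nat.gcd_eq_right_iff_dvd.mp ((Nat.gcd_le_right n a_pos).antisymm le_gcd)

lemma padicValInt_corial_eq_sum_div_rank (hC : IsStrongDivSeq Cs) {p : ℕ} [hp : Fact p.Prime]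
    {α : ℕ → ℕ} (hα : ∀ k, 1 ≤ k → IsRank Cs (p ^ k) (α k)) {n b : ℕ}
    (hb : padicValInt p (Corial Cs n) < b) :
    padicValInt p (Corial Cs n) = ∑ k ∈ Ico 1 b, n / α k := by
  have val_sum := padicValInt_corial_eq_sum_padicValInt (p := p) hC.1 n
  have val_lt {i : ℕ} (hi : i ∈ Ioc 0 n) : padicValInt p (Cs i) < b :=
    (single_le_sum_of_canonicallyOrdered hi).trans_lt (val_sum ▸ hb)
  calc padicValInt p (Corial Cs n)
      = ∑ i ∈ Ioc 0 n, padicValInt p (Cs i) := val_sum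
    _ = ∑ i ∈ Ioc 0 n, #{k ∈ Ico 1 b | ((p ^ k : ℕ) : ℤ) ∣ Cs i} :=
        sum_congr rfl fun i hi ↦
          padicValInt_eq_card_pow_dvd hp.out.ne_one (hC.1 i (mem_Ioc.mp hi).1) (val_lt hi)
    _ = ∑ k ∈ Ico 1 b, #{i ∈ Ioc 0 n | ((p ^ k : ℕ) : ℤ) ∣ Cs i} :=
        sum_card_bipartiteAbove_eq_sum_card_bipartiteBelow _
    _ = ∑ k ∈ Ico 1 b, #{i ∈ Ioc 0 n | α k ∣ i} :=
        sum_congr rfl fun k hk ↦ congrArg card <| filter_congr fun i hi ↦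
          hC.dvd_iff_rank_dvd (hα k (mem_Ico.mp hk).1) (mem_Ioc.mp hi).1
    _ = ∑ k ∈ Ico 1 b, n / α k :=
        sum_congr rfl fun k _ ↦ Nat.Ioc_filter_dvd_card_eq_div n (α k)

end StrongDivSeq

lemma sum_div_eq_padicValNat_factorial {p : ℕ} [Fact p.Prime] {α : ℕ → ℕ} {s : ℕ}
    (hα : ∀ k, s < k → α k = p ^ (k - s) * α s) {n b : ℕ} (hb : Nat.log p (n / α s) < b) :
    ∑ k ∈ Ico (s + 1) (s + b), n / α k = padicValNat p (n / α s).factorial := by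
  rw [padicValNat_factorial hb, add_comm s 1, add_comm s b,
    ← sum_Ico_add (fun k ↦ n / α k) 1 b s]
  refine sum_congr rfl fun j hj ↦ ?_
  have one_le_j := (mem_Ico.mp hj).1
  rw [hα (s + j) (by omega), Nat.add_sub_cancel_left, mul_comm, Nat.div_div_eq_div_mul]

theorem stmt13 (Cs : ℕ → ℤ) (p : ℕ) (hp : p.Prime) (α : ℕ → ℕ) (s : ℕ)
    (hC : IsStrongDivSeq Cs) (hacc : AcceptablePrime Cs p α s) (n : ℕ) :
    padicValInt p (Corial Cs n) =
      (∑ k ∈ Finset.Icc 1 s, n / α k) + padicValNat p (Nat.factorial (n / α s)) := by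
  have : Fact p.Prime := ⟨hp⟩
  obtain ⟨-, isRank_α, α_eq⟩ := hacc
  obtain ⟨b, hb⟩ := exists_gt (max (padicValInt p (Corial Cs n)) (Nat.log p (n / α s)))
  obtain ⟨val_lt, log_lt⟩ := max_lt_iff.mp hb
  calc padicValInt p (Corial Cs n)
      = ∑ k ∈ Ico 1 (s + b), n / α k :=
        padicValInt_corial_eq_sum_div_rank hC isRank_α (by omega)
    _ = ∑ k ∈ Ico 1 (s + 1), n / α k + ∑ k ∈ Ico (s + 1) (s + b), n / α k :=
        (sum_Ico_consecutive _ (by omega) (by omega)).symm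
    _ = ∑ k ∈ Icc 1 s, n / α k + padicValNat p (n / α s).factorial := by
        rw [Ico_add_one_right_eq_Icc, sum_div_eq_padicValNat_factorial α_eq log_lt]
end
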